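/- Let n ∈ ℕ and let f : ℝⁿ → ℝ be continuous. If the embedded function f̃, given by f̃(φ, x) := ∫_{ℝⁿ} f(y) φ(y − x) dy for φ ∈ 𝒜₀(ℝⁿ), is negligible, then f = 0 identically; that is, the embedding of distributions into the Colombeau algebra is injective on continuous functions. -/

import Mathlib

open MeasureTheory Filter Topology

noncomputable section

namespace Colombeau

/-- `φ ∈ 𝒟(ℝⁿ)`: smooth compactly supported function. -/
def IsTestFunction (n : ℕ) (φ : (Fin n → ℝ) → ℝ) : Prop :=
  ContDiff ℝ (⊤ : ℕ∞) φ ∧ HasCompactSupport φ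

/-- `φ ∈ 𝒜₀(ℝⁿ)`: test function with integral one. -/
def IsA0 (n : ℕ) (φ : (Fin n → ℝ) → ℝ) : Prop :=
  IsTestFunction n φ ∧ ∫ x, φ x = 1

/-- `φ ∈ 𝒜_q(ℝⁿ)`: vanishing moments up to order `q`. -/
def IsAq (n q : ℕ) (φ : (Fin n → ℝ) → ℝ) : Prop :=
  IsA0 n φ ∧ ∀ i : Fin n → ℕ, 1 ≤ ∑ j, i j → ∑ j, i j ≤ q →
    ∫ x, (∏ j, x j ^ i j) * φ x = 0

/-- the scaled mollifier `φ_ε(x) = ε⁻ⁿ φ(x/ε)`. -/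
def scaled (n : ℕ) (φ : (Fin n → ℝ) → ℝ) (ε : ℝ) : (Fin n → ℝ) → ℝ :=
  fun x => (ε ^ n)⁻¹ * φ (ε⁻¹ • x)

/-- partial derivative `∂_i`. -/
def partialD {n : ℕ} (i : Fin n) (f : (Fin n → ℝ) → ℝ) : (Fin n → ℝ) → ℝ :=
  fun x => fderiv ℝ f x (Pi.single i 1)

/-- multi-index derivative `∂^k = ∂₁^{k₁} ⋯ ∂_n^{k_n}`. -/
def multiD {n : ℕ} (k : Fin n → ℕ) (f : (Fin n → ℝ) → ℝ) : (Fin n → ℝ) → ℝ :=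
  (List.finRange n).foldl (fun g i => (partialD i)^[k i] g) f

/-- Moderate functions of the basic space. -/
def Moderate (n : ℕ) (F : ((Fin n → ℝ) → ℝ) → (Fin n → ℝ) → ℝ) : Prop :=
  ∀ K : Set (Fin n → ℝ), IsCompact K → ∀ k : Fin n → ℕ,
    ∃ N : ℕ, ∀ φ, IsAq n N φ →
      ∃ C > 0, ∀ᶠ ε in 𝓝[>] (0:ℝ), ∀ x ∈ K,
        |multiD k (F (scaled n φ ε)) x| ≤ C * ε ^ (-(N:ℤ))

/-- Negligible functions of the basic space. -/
def Negligible (n : ℕ) (F : ((Fin n → ℝ) → ℝ) → (Fin n → ℝ) → ℝ) : Prop :=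
  ∀ K : Set (Fin n → ℝ), IsCompact K → ∀ k : Fin n → ℕ, ∀ m : ℕ,
    ∃ q : ℕ, ∀ φ, IsAq n q φ →
      ∃ C > 0, ∀ᶠ ε in 𝓝[>] (0:ℝ), ∀ x ∈ K,
        |multiD k (F (scaled n φ ε)) x| ≤ C * ε ^ m

/-!
Negligibility forces `f̃(φ_ε, x) → 0` for every `φ ∈ 𝒜_q(ℝⁿ)`, with `q` depending on `x`. On the
other hand the kernels `y ↦ φ_ε(y - x)` have integral one, live on balls of radius `O(ε)` and are
bounded by a multiple of the inverse volume of these balls, so `f̃(φ_ε, x) → f(x)` at every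
Lebesgue point `x` of a locally integrable `f`. That `𝒜_q(ℝⁿ)` is nonempty follows by Richardson
extrapolation: dilation by `2` multiplies the moments of order `p` by `2 ^ p`, so a suitable
combination of `φ` and its dilation kills them while vanishing moments of other orders remain
zero.
-/

/-- The moment `∫ x ^ i φ(x) dx` of multi-index order `i`. -/
def moment {n : ℕ} (i : Fin n → ℕ) (φ : (Fin n → ℝ) → ℝ) : ℝ :=
  ∫ x, (∏ j, x j ^ i j) * φ x

/-- Richardson extrapolation: for `p ≠ 0`, the combination of `φ` and its dilation by `2` which has
the same integral as `φ` and whose moments of order `p` vanish. It is `0` for `p = 0`. -/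
def richardson {n : ℕ} (p : ℕ) (φ : (Fin n → ℝ) → ℝ) : (Fin n → ℝ) → ℝ :=
  ((2 : ℝ) ^ p - 1)⁻¹ • ((2 : ℝ) ^ p • φ - scaled n φ 2)

section Scaling

variable {n : ℕ} {φ : (Fin n → ℝ) → ℝ} {ε : ℝ}

theorem integral_mul_scaled (g φ : (Fin n → ℝ) → ℝ) (hε : 0 < ε) :
    ∫ x, g x * scaled n φ ε x = ∫ z, g (ε • z) * φ z := by
  have hn : 0 < ε ^ n := pow_pos hε n
  have hsubst : ∫ x, g x * φ (ε⁻¹ • x) = ε ^ n * ∫ z, g (ε • z) * φ z := by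
    simpa only [smul_inv_smul₀ hε.ne', Module.finrank_fin_fun, abs_of_pos hn, smul_eq_mul] using
      Measure.integral_comp_inv_smul volume (fun z => g (ε • z) * φ z) ε
  simp only [scaled, mul_left_comm (g _)]
  rw [integral_const_mul, hsubst, inv_mul_cancel_left₀ hn.ne']

theorem integral_scaled_sub (φ : (Fin n → ℝ) → ℝ) (hε : 0 < ε) (x : Fin n → ℝ) :
    ∫ y, scaled n φ ε (y - x) = ∫ y, φ y := by
  rw [integral_sub_right_eq_self (scaled n φ ε)]
  simpa only [one_mul] using integral_mul_scaled (fun _ => 1) φ hε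

theorem support_scaled_sub_subset {R : ℝ} (hφ : Function.support φ ⊆ Metric.closedBall 0 R)
    (hε : 0 < ε) (x : Fin n → ℝ) :
    (Function.support fun y => scaled n φ ε (y - x)) ⊆ Metric.closedBall x (R * ε) := by
  intro y hy
  have hmem : ε⁻¹ • (y - x) ∈ Metric.closedBall 0 R := hφ (right_ne_zero_of_mul hy)
  rwa [mem_closedBall_zero_iff, norm_smul, norm_inv, Real.norm_of_nonneg hε.le,
    inv_mul_le_iff₀ hε, mul_comm, ← mem_closedBall_iff_norm] at hmem

theorem abs_scaled_le {M R : ℝ} (hφ : ∀ x, |φ x| ≤ M) (hR : 0 < R) (hε : 0 < ε)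
    (x y : Fin n → ℝ) :
    |scaled n φ ε y| ≤ (2 * R) ^ n * M / volume.real (Metric.closedBall x (R * ε)) := by
  have hvol : volume.real (Metric.closedBall x (R * ε)) = (2 * R) ^ n * ε ^ n := by
    rw [measureReal_def, Real.volume_pi_closedBall x (by positivity),
      ENNReal.toReal_ofReal (by positivity), Fintype.card_fin, ← mul_assoc, mul_pow]
  rw [hvol, mul_div_mul_left _ _ (by positivity), scaled, abs_mul, abs_of_pos (by positivity),
    inv_mul_eq_div]
  gcongr
  exact hφ _

theorem moment_scaled (i : Fin n → ℕ) (φ : (Fin n → ℝ) → ℝ) (hε : 0 < ε) :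
    moment i (scaled n φ ε) = ε ^ (∑ j, i j) * moment i φ := by
  rw [moment, integral_mul_scaled (fun x => ∏ j, x j ^ i j) φ hε, moment, ← integral_const_mul]
  simp only [Pi.smul_apply, smul_eq_mul, mul_pow, Finset.prod_mul_distrib,
    Finset.prod_pow_eq_pow_sum, mul_assoc]

theorem IsTestFunction.scaled (hφ : IsTestFunction n φ) (hε : ε ≠ 0) :
    IsTestFunction n (scaled n φ ε) :=
  ⟨contDiff_const.mul (hφ.1.comp (contDiff_const_smul _)),
    (hφ.2.comp_smul (inv_ne_zero hε)).mul_left⟩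

end Scaling

section VanishingMoments

variable {n : ℕ} {φ : (Fin n → ℝ) → ℝ}

theorem moment_zero (φ : (Fin n → ℝ) → ℝ) : moment 0 φ = ∫ x, φ x := by
  simp only [moment, Pi.zero_apply, pow_zero, Finset.prod_const_one, one_mul]

theorem IsTestFunction.integrable_monomial_mul (hφ : IsTestFunction n φ) (i : Fin n → ℕ) :
    Integrable fun x => (∏ j, x j ^ i j) * φ x :=
  have := hφ.1.continuous
  Continuous.integrable_of_hasCompactSupport (by fun_prop) hφ.2.mul_left

theorem IsTestFunction.richardson (hφ : IsTestFunction n φ) (p : ℕ) :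
    IsTestFunction n (richardson p φ) :=
  have hs := hφ.scaled two_ne_zero
  ⟨contDiff_const.smul ((contDiff_const.smul hφ.1).sub hs.1),
    (hφ.2.smul_left.sub hs.2).smul_left⟩

theorem moment_richardson (hφ : IsTestFunction n φ) (p : ℕ) (i : Fin n → ℕ) :
    moment i (richardson p φ) =
      ((2 : ℝ) ^ p - 1)⁻¹ * (2 ^ p - 2 ^ (∑ j, i j)) * moment i φ := by
  have hs := hφ.scaled two_ne_zero
  calc moment i (richardson p φ)
      = ∫ x, ((2 : ℝ) ^ p - 1)⁻¹ * (2 ^ p * ((∏ j, x j ^ i j) * φ x) -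
          (∏ j, x j ^ i j) * scaled n φ 2 x) := by
        unfold moment
        congr 1 with x
        simp only [Colombeau.richardson, Pi.smul_apply, Pi.sub_apply, smul_eq_mul]
        ring
    _ = ((2 : ℝ) ^ p - 1)⁻¹ * (2 ^ p * moment i φ - moment i (scaled n φ 2)) := by
        rw [integral_const_mul, integral_sub ((hφ.integrable_monomial_mul i).const_mul _)
          (hs.integrable_monomial_mul i), integral_const_mul, moment, moment]
    _ = ((2 : ℝ) ^ p - 1)⁻¹ * (2 ^ p - 2 ^ (∑ j, i j)) * moment i φ := by
        rw [moment_scaled i φ two_pos]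
        ring

theorem IsAq.richardson {q : ℕ} (hφ : IsAq n q φ) : IsAq n (q + 1) (richardson (q + 1) φ) := by
  obtain ⟨⟨htest, hint⟩, hmom⟩ := hφ
  have hpow : (2 : ℝ) ^ (q + 1) - 1 ≠ 0 :=
    (sub_pos.2 (one_lt_pow₀ one_lt_two q.succ_ne_zero)).ne'
  refine ⟨⟨htest.richardson _, ?_⟩, fun i hi hiq => (moment_richardson htest _ i).trans ?_⟩
  · rw [← moment_zero, moment_richardson htest, moment_zero, hint]
    simp [hpow]
  · rcases hiq.lt_or_eq with hlt | heq
    · rw [moment, hmom i hi (Nat.lt_succ_iff.1 hlt), mul_zero]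
    · rw [heq, sub_self, mul_zero, zero_mul]

theorem exists_isAq (n q : ℕ) : ∃ φ, IsAq n q φ := by
  induction q with
  | zero =>
    let b : ContDiffBump (0 : Fin n → ℝ) := ⟨1, 2, one_pos, one_lt_two⟩
    exact ⟨b.normed volume, ⟨⟨b.contDiff_normed, b.hasCompactSupport_normed⟩,
      b.integral_normed⟩, fun _ hi hi₀ => by omega⟩
  | succ q ih =>
    obtain ⟨φ, hφ⟩ := ih
    exact ⟨richardson (q + 1) φ, hφ.richardson⟩

end VanishingMoments

section LebesguePoints

variable {E : Type*} [NormedAddCommGroup E] [NormedSpace ℝ E] [CompleteSpace E]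
  {n : ℕ} {f : (Fin n → ℝ) → E}

theorem tendsto_integral_scaled_smul_of_tendsto_average {φ : (Fin n → ℝ) → ℝ}
    (hcont : Continuous φ) (hcompact : HasCompactSupport φ) (hint : ∫ y, φ y = 1)
    {x : Fin n → ℝ} {c : E} (hf : IntegrableAtFilter f (𝓝 x))
    (hx : Tendsto (fun r => ⨍ y in Metric.closedBall x r, ‖f y - c‖) (𝓝[>] 0) (𝓝 0)) :
    Tendsto (fun ε => ∫ y, scaled n φ ε (y - x) • f y) (𝓝[>] 0) (𝓝 c) := by
  obtain ⟨M, hM⟩ := hcompact.exists_bound_of_continuous hcont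
  obtain ⟨R, hR, hsupp⟩ := hcompact.isCompact.isBounded.subset_closedBall_lt 0 0
  have hpos : ∀ᶠ ε : ℝ in 𝓝[>] 0, 0 < ε := self_mem_nhdsWithin
  have hradius : Tendsto (fun ε => R * ε) (𝓝[>] 0) (𝓝[>] 0) :=
    tendsto_nhdsWithin_iff.2
      ⟨((continuous_const_mul R).tendsto' 0 0 (mul_zero R)).mono_left nhdsWithin_le_nhds,
        hpos.mono fun _ => mul_pos hR⟩
  refine tendsto_integral_smul_of_tendsto_average_norm_sub ((2 * R) ^ n * M)
    (hx.comp hradius) ?_ ?_ ?_ ?_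
  · exact ((tendsto_closedBall_smallSets x).comp
      (hradius.mono_right nhdsWithin_le_nhds)).eventually hf.eventually
  · exact tendsto_const_nhds.congr' (hpos.mono fun ε hε =>
      ((integral_scaled_sub φ hε x).trans hint).symm)
  · exact hpos.mono fun ε hε =>
      support_scaled_sub_subset ((subset_tsupport φ).trans hsupp) hε x
  · exact hpos.mono fun ε hε y => abs_scaled_le hM hR hε x (y - x)

theorem ae_tendsto_integral_scaled_smul (hf : LocallyIntegrable f) :
    ∀ᵐ x, ∀ φ, IsA0 n φ →
      Tendsto (fun ε => ∫ y, scaled n φ ε (y - x) • f y) (𝓝[>] 0) (𝓝 (f x)) := by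
  filter_upwards [(Besicovitch.vitaliFamily volume).ae_tendsto_average_norm_sub hf] with x hx φ hφ
  exact tendsto_integral_scaled_smul_of_tendsto_average hφ.1.1.continuous hφ.1.2 hφ.2 (hf x)
    (hx.comp (Besicovitch.tendsto_filterAt volume x))

end LebesguePoints

theorem multiD_zero {n : ℕ} (f : (Fin n → ℝ) → ℝ) : multiD 0 f = f := by
  simp [multiD]

theorem Negligible.exists_tendsto_zero {n : ℕ} {F : ((Fin n → ℝ) → ℝ) → (Fin n → ℝ) → ℝ}
    (hF : Negligible n F) (x : Fin n → ℝ) :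
    ∃ q, ∀ φ, IsAq n q φ → Tendsto (fun ε => F (scaled n φ ε) x) (𝓝[>] 0) (𝓝 0) := by
  obtain ⟨q, hq⟩ := hF {x} isCompact_singleton 0 1
  refine ⟨q, fun φ hφ => ?_⟩
  obtain ⟨C, -, hC⟩ := hq φ hφ
  have hbound : Tendsto (fun ε : ℝ => C * ε ^ 1) (𝓝[>] 0) (𝓝 0) :=
    (Continuous.tendsto' (by fun_prop) 0 0 (by simp)).mono_left nhdsWithin_le_nhds
  refine squeeze_zero_norm' (hC.mono fun ε hε => ?_) hbound
  simpa only [multiD_zero, Real.norm_eq_abs] using hε x rfl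

theorem embedding_injective_on_continuous_general {n : ℕ} {f : (Fin n → ℝ) → ℝ}
    (hf : LocallyIntegrable f)
    (hneg : Negligible n (fun φ x => ∫ y, f y * φ (y - x))) :
    f =ᵐ[volume] 0 := by
  filter_upwards [ae_tendsto_integral_scaled_smul hf] with x hx
  obtain ⟨q, hzero⟩ := hneg.exists_tendsto_zero x
  obtain ⟨φ, hφ⟩ := exists_isAq n q
  have hlim := hx φ hφ.1
  simp only [smul_eq_mul, mul_comm _ (f _)] at hlim
  exact tendsto_nhds_unique hlim (hzero φ hφ)

/-- the embedding is injective on continuous functions: if the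
embedding of a continuous function is negligible, the function vanishes. -/
theorem embedding_injective_on_continuous (n : ℕ) (f : (Fin n → ℝ) → ℝ)
    (hf : Continuous f)
    (hneg : Negligible n (fun φ x => ∫ y, f y * φ (y - x))) :
    ∀ x, f x = 0 :=
  congrFun <| (hf.ae_eq_iff_eq volume continuous_zero).1 <|
    embedding_injective_on_continuous_general hf.locallyIntegrable hneg

end Colombeau
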